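/- Let N be a topological n-manifold without boundary admitting a continuous binary operation · : N × N → N such that for every x ∈ N the left shift λ_x : N → N, y ↦ x·y, is injective. Then for every points e, x ∈ N and every neighborhood O_e ⊆ N of e there exists a neighborhood U_x ⊆ N of x such that the intersection ⋂_{u∈U_x} u·O_e is a neighborhood of the point x·e in N. -/

import Mathlib

/-!
The statement contains invariance of domain for `ℝⁿ` (take an operation independent of its first
argument), so that theorem is proved here, in a form that is stable under perturbation.

Work in charts at `e` and at `x·e`. The maps `h_u : z ↦ u·z` become continuous maps of a closed
ball `B` into `ℝⁿ`, uniformly close to the injective map `h_x` when `u` is close to `x`, because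
the operation is jointly continuous and `B` is compact. It therefore suffices that for an injective
continuous `f : B → ℝⁿ` there is `η > 0` such that every continuous `h` with `|h - f| < η` on `B`
satisfies `ball (f 0) η ⊆ h(B)`; this is `exists_ball_subset_image_of_close`. Injectivity is thus
only used for the left shift by `x`.

For this, let `G` be a continuous extension to `ℝⁿ` of `f⁻¹` (Tietze). If `c` near `f 0` were not
in `h(B)`, one could push `h(B)` off the open ball of radius `ε` about `c` and replace `G` by a
close map `P` without zeros on the sphere of radius `ε` about `c` (a generic translate of a `C¹`
approximation works, as the image of the sphere is a null set). The composite of `h`, the push and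
`P` stays close to the identity and has no zero on `B`, which contradicts Brouwer's fixed point
theorem.

Brouwer's theorem is reduced by smooth approximation to the nonexistence of a `C¹` retraction `r`
of a ball onto its boundary sphere (`no_contDiff_retraction`), and this follows from the change of
variables formula: for small `t > 0` the map `x ↦ x + t (r x - x)` is a bijection of the open ball
with positive Jacobian, so the integral of its Jacobian is the volume of the ball. The integrand is
polynomial in `t`, so by Lagrange interpolation the same value is attained at `t = 1`, where the
Jacobian of `r` vanishes identically.
-/

/-- A topological `n`-manifold without boundary: every point has an open
neighborhood homeomorphic to an open subset of `ℝⁿ`. (Paracompactness and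
Hausdorffness are imposed as instance hypotheses.) -/
def IsTopManifold (n : ℕ) (M : Type*) [TopologicalSpace M] : Prop :=
  ∀ x : M, ∃ (U : Set M) (V : Set (EuclideanSpace ℝ (Fin n))),
    IsOpen U ∧ x ∈ U ∧ IsOpen V ∧ Nonempty (U ≃ₜ V)

/-- The closed half-space `ℝⁿ₊ = {x ∈ ℝⁿ : xₙ ≥ 0}` (the last coordinate is
nonnegative). -/
def halfSpace (n : ℕ) : Set (EuclideanSpace ℝ (Fin n)) :=
  {x | ∀ i : Fin n, (i : ℕ) = n - 1 → 0 ≤ x i}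

/-- A topological `n`-manifold with boundary: every point has an open neighborhood
admitting an open topological embedding into the half-space `ℝⁿ₊`. -/
def IsTopManifoldWithBoundary (n : ℕ) (M : Type*) [TopologicalSpace M] : Prop :=
  ∀ x : M, ∃ (U : Set M) (f : M → EuclideanSpace ℝ (Fin n)),
    IsOpen U ∧ x ∈ U ∧ Set.MapsTo f U (halfSpace n) ∧ Set.InjOn f U ∧ ContinuousOn f U ∧
    ∀ V ⊆ U, IsOpen V →
      ∃ W : Set (EuclideanSpace ℝ (Fin n)), IsOpen W ∧ f '' V = W ∩ halfSpace n

/-- The boundary `∂M` of a manifold with boundary: points having no open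
neighborhood homeomorphic to `ℝⁿ`. -/
def manifoldBoundary (n : ℕ) (M : Type*) [TopologicalSpace M] : Set M :=
  {x | ¬ ∃ U : Set M, IsOpen U ∧ x ∈ U ∧ Nonempty (U ≃ₜ EuclideanSpace ℝ (Fin n))}

open MeasureTheory Metric Set Topology

/-! ### The radial retraction onto a ball -/

section RadialProj

variable {E : Type*} [NormedAddCommGroup E] [NormedSpace ℝ E]

/-- The radial retraction of a normed space onto the closed ball of radius `R` about `0`. -/
noncomputable def radialProj (R : ℝ) (x : E) : E := (R / max R ‖x‖) • x

lemma radialProj_of_norm_le {R : ℝ} (hR : 0 < R) {x : E} (hx : ‖x‖ ≤ R) : radialProj R x = x := by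
  rw [radialProj, max_eq_left hx, div_self hR.ne', one_smul]

lemma norm_radialProj_le {R : ℝ} (hR : 0 < R) (x : E) : ‖radialProj R x‖ ≤ R := by
  have hm : 0 < max R ‖x‖ := lt_max_of_lt_left hR
  rw [radialProj, norm_smul, Real.norm_of_nonneg (by positivity), div_mul_eq_mul_div,
    div_le_iff₀ hm]
  exact mul_le_mul_of_nonneg_left (le_max_right _ _) hR.le

lemma norm_radialProj_of_le {R : ℝ} (hR : 0 < R) {x : E} (hx : R ≤ ‖x‖) :
    ‖radialProj R x‖ = R := by
  rw [radialProj, max_eq_right hx, norm_smul, Real.norm_of_nonneg (by positivity),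
    div_mul_cancel₀ _ (hR.trans_le hx).ne']

lemma dist_radialProj_le {R : ℝ} (hR : 0 < R) (x y : E) :
    dist (radialProj R x) (radialProj R y) ≤ 2 * dist x y := by
  set m := max R ‖x‖ with hm
  set k := max R ‖y‖ with hk
  have hm0 : 0 < m := lt_max_of_lt_left hR
  have hk0 : 0 < k := lt_max_of_lt_left hR
  have hRm : R ≤ m := le_max_left _ _
  have hyk : ‖y‖ ≤ k := le_max_right _ _
  have hmk : |k - m| ≤ ‖x - y‖ := by
    have h := abs_max_sub_max_le_max R ‖y‖ R ‖x‖
    rw [sub_self, abs_zero, max_eq_right (abs_nonneg (‖y‖ - ‖x‖))] at h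
    exact h.trans ((abs_norm_sub_norm_le y x).trans (norm_sub_rev y x).le)
  have key : radialProj R x - radialProj R y
      = (R / m) • (x - y) + ((R / m) * ((k - m) / k)) • y := by
    have : R / k = R / m - (R / m) * ((k - m) / k) := by field_simp; ring
    rw [radialProj, radialProj, ← hm, ← hk, this]
    module
  rw [dist_eq_norm, dist_eq_norm, key]
  have h1 : R / m ≤ 1 := (div_le_one hm0).2 hRm
  have h0 : 0 ≤ R / m := by positivity
  calc _ ≤ ‖(R / m) • (x - y)‖ + ‖((R / m) * ((k - m) / k)) • y‖ := norm_add_le _ _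
    _ = (R / m) * ‖x - y‖ + (R / m) * (|k - m| * (‖y‖ / k)) := by
        rw [norm_smul, norm_smul, Real.norm_of_nonneg h0, Real.norm_eq_abs, abs_mul, abs_of_nonneg h0,
          abs_div, abs_of_pos hk0]
        ring
    _ ≤ 1 * ‖x - y‖ + 1 * (‖x - y‖ * 1) := by
        gcongr
        exact (div_le_one hk0).2 hyk
    _ = 2 * ‖x - y‖ := by ring

lemma continuous_radialProj {R : ℝ} (hR : 0 < R) : Continuous (radialProj R : E → E) :=
  (LipschitzWith.of_dist_le_mul (K := 2) (dist_radialProj_le hR)).continuous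

end RadialProj

/-! ### No `C¹` retraction of a ball onto its boundary -/

section NoRetraction

variable {E : Type*} [NormedAddCommGroup E] [InnerProductSpace ℝ E] [FiniteDimensional ℝ E]

/-- `t ↦ det (1 + t A)` is a polynomial function of degree at most the dimension. -/
lemma exists_polynomial_det_one_add_smul (A : E →L[ℝ] E) :
    ∃ p : Polynomial ℝ, p.natDegree ≤ Module.finrank ℝ E ∧
      ∀ t : ℝ, p.eval t = (1 + t • A).det := by
  let b := Module.finBasis ℝ E
  let M := LinearMap.toMatrix b b (A : E →ₗ[ℝ] E)
  refine ⟨Matrix.det ((Polynomial.X : Polynomial ℝ) • M.map Polynomial.C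
    + (1 : Matrix _ _ ℝ).map Polynomial.C), ?_, fun t => ?_⟩
  · simpa using Polynomial.natDegree_det_X_add_C_le M 1
  · have h1 : (1 + t • A).det = (1 + t • M).det := by
      rw [ContinuousLinearMap.det, ← LinearMap.det_toMatrix b]
      congr 1
      simp [M, LinearMap.toMatrix_one]
    rw [h1, ← Polynomial.coe_evalRingHom, RingHom.map_det]
    congr 1
    ext i j
    simp [Matrix.one_apply, add_comm]
    split_ifs <;> simp [mul_comm]

/-- Lagrange interpolation with nodes in `(0, ε)`: the value at `1` of a polynomial of degree at
most `d` is a fixed linear combination of its values at the nodes. -/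
lemma exists_interpolation_nodes (d : ℕ) {ε : ℝ} (hε : 0 < ε) :
    ∃ w τ : ℕ → ℝ, (∀ i, τ i ∈ Ioo 0 ε) ∧ ∀ p : Polynomial ℝ, p.natDegree ≤ d →
      p.eval 1 = ∑ i ∈ Finset.range (d + 1), w i * p.eval (τ i) := by
  have hinj : Set.InjOn (fun i : ℕ => ε / (i + 2)) (Finset.range (d + 1)) := by
    intro i _ j _ hij
    have : ((i : ℝ) + 2) = j + 2 := by
      have h1 : (i : ℝ) + 2 ≠ 0 := by positivity
      have h2 : (j : ℝ) + 2 ≠ 0 := by positivity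
      have h3 : ε / (i + 2) = ε / ((j : ℝ) + 2) := hij
      rw [div_eq_div_iff h1 h2] at h3
      exact (mul_left_cancel₀ hε.ne' h3).symm
    exact_mod_cast (add_right_cancel this)
  refine ⟨fun i => (Lagrange.basis (Finset.range (d + 1)) (fun i : ℕ => ε / (i + 2)) i).eval 1,
    fun i => ε / (i + 2), fun i => ⟨by positivity, ?_⟩, fun p hp => ?_⟩
  · apply div_lt_self hε
    have : (0 : ℝ) ≤ i := Nat.cast_nonneg i
    linarith
  · have hdeg : p.degree < (Finset.range (d + 1)).card := by
      rw [Finset.card_range]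
      exact lt_of_le_of_lt Polynomial.degree_le_natDegree (by exact_mod_cast Nat.lt_succ_of_le hp)
    conv_lhs => rw [Lagrange.eq_interpolate hinj hdeg]
    rw [Lagrange.interpolate_apply, Polynomial.eval_finsetSum]
    refine Finset.sum_congr rfl fun i _ => ?_
    rw [Polynomial.eval_mul, Polynomial.eval_C, mul_comm]

/-- The linear homotopy from the identity to a `C¹` retraction of the ball onto its boundary
consists, for small times, of bijections of the open ball. Extending the displacement by zero,
i.e. precomposing it with the radial projection, makes it globally Lipschitz, so that the
contraction principle gives surjectivity. -/
lemma homotopy_bijOn_ball {R : ℝ} (hR : 0 < R) {r : E → E} (hr : ContDiff ℝ 1 r)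
    (hnorm : ∀ x, ‖r x‖ = R) (hfix : ∀ x, ‖x‖ = R → r x = x) :
    ∃ ε : ℝ, 0 < ε ∧ ∀ t ∈ Ioo 0 ε, BijOn (fun x => x + t • (r x - x)) (ball 0 R) (ball 0 R) := by
  have hg0 : ContDiff ℝ 1 (fun x => r x - x) := hr.sub contDiff_id
  obtain ⟨K, hK⟩ := (hg0.locallyLipschitz.locallyLipschitzOn
    (s := closedBall 0 R)).exists_lipschitzOnWith_of_compact (isCompact_closedBall 0 R)
  set g : E → E := fun x => r (radialProj R x) - radialProj R x with hg
  have hgK : ∀ x y, dist (g x) (g y) ≤ K * (2 * dist x y) := fun x y =>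
    (hK.dist_le_mul _ (by simpa using norm_radialProj_le hR x) _
      (by simpa using norm_radialProj_le hR y)).trans
      (mul_le_mul_of_nonneg_left (dist_radialProj_le hR x y) K.2)
  have hgin : ∀ x, ‖x‖ ≤ R → g x = r x - x := fun x hx => by
    simp only [hg, radialProj_of_norm_le hR hx]
  have hgout : ∀ x, R ≤ ‖x‖ → g x = 0 := fun x hx => by
    simp only [hg, hfix _ (norm_radialProj_of_le hR hx), sub_self]
  refine ⟨min 1 (1 / (2 * K + 1)), by positivity, fun t ht => ?_⟩
  have ht0 : 0 < t := ht.1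
  have ht1 : t < 1 := ht.2.trans_le (min_le_left _ _)
  have htK : t * (2 * K) < 1 := by
    have h2 : t < 1 / (2 * K + 1) := ht.2.trans_le (min_le_right _ _)
    rw [lt_div_iff₀ (by positivity)] at h2
    linarith
  refine ⟨fun x hx => ?_, fun x hx y hy hxy => ?_, fun y hy => ?_⟩
  · rw [mem_ball_zero_iff] at hx ⊢
    beta_reduce
    have : x + t • (r x - x) = (1 - t) • x + t • r x := by module
    rw [this]
    calc _ ≤ ‖(1 - t) • x‖ + ‖t • r x‖ := norm_add_le _ _
      _ = (1 - t) * ‖x‖ + t * R := by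
        rw [norm_smul, norm_smul, hnorm, Real.norm_of_nonneg (by linarith),
          Real.norm_of_nonneg ht0.le]
      _ < R := by nlinarith
  · rw [mem_ball_zero_iff] at hx hy
    have hxy' : x + t • g x = y + t • g y := by
      rw [hgin x hx.le, hgin y hy.le]; exact hxy
    have h1 : x - y = t • (g y - g x) := by
      rw [smul_sub, sub_eq_sub_iff_add_eq_add, hxy', add_comm]
    have h2 : dist x y ≤ t * (2 * K) * dist x y := by
      have : dist x y = t * dist (g x) (g y) := by
        rw [dist_eq_norm, h1, norm_smul, Real.norm_of_nonneg ht0.le, dist_comm, dist_eq_norm]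
      calc dist x y = t * dist (g x) (g y) := this
        _ ≤ t * (K * (2 * dist x y)) := mul_le_mul_of_nonneg_left (hgK x y) ht0.le
        _ = _ := by ring
    by_contra hne
    have := dist_pos.2 hne
    nlinarith
  · rw [mem_ball_zero_iff] at hy
    have hT : ContractingWith (t.toNNReal * (2 * K)) (fun x => y - t • g x) := by
      refine ⟨?_, LipschitzWith.of_dist_le_mul fun a b => ?_⟩
      · rw [← NNReal.coe_lt_coe]
        simpa [Real.coe_toNNReal t ht0.le] using htK
      push_cast
      rw [Real.coe_toNNReal t ht0.le, dist_sub_left, dist_smul₀, Real.norm_of_nonneg ht0.le]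
      calc t * dist (g a) (g b) ≤ t * (K * (2 * dist a b)) :=
            mul_le_mul_of_nonneg_left (hgK a b) ht0.le
        _ = t * (2 * K) * dist a b := by ring
    obtain ⟨x, hx, -⟩ := hT.exists_fixedPoint 0 (edist_ne_top _ _)
    have hx' : y - t • g x = x := hx
    have hxR : ‖x‖ < R := by
      by_contra! h
      rw [hgout x h, smul_zero, sub_zero] at hx'
      rw [hx'] at hy
      linarith
    refine ⟨x, by simpa using hxR, ?_⟩
    change x + t • (r x - x) = y
    rw [← hgin x hxR.le, ← sub_eq_iff_eq_add.1 hx']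


/-- A `C¹` map of constant positive norm is nowhere submersive. -/
lemma det_fderiv_eq_zero_of_norm_const {R : ℝ} (hR : 0 < R) {r : E → E} (hr : ContDiff ℝ 1 r)
    (hnorm : ∀ x, ‖r x‖ = R) (x : E) : (fderiv ℝ r x).det = 0 := by
  by_contra hdet
  have hd : HasFDerivAt r (fderiv ℝ r x) x := (hr.differentiable one_ne_zero x).hasFDerivAt
  have hperp : ∀ v, inner ℝ (r x) (fderiv ℝ r x v) = 0 := by
    intro v
    have h1 := (hd.norm_sq).congr_of_eventuallyEq (f₁ := fun _ => R ^ 2)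
      (Filter.Eventually.of_forall fun y => by simp [hnorm])
    have h2 := h1.unique (hasFDerivAt_const (R ^ 2) x)
    have h3 := congrArg (fun L : E →L[ℝ] ℝ => L v) h2
    simpa using h3
  have hsurj : Function.Surjective (fderiv ℝ r x) := by
    have hu : IsUnit (fderiv ℝ r x : E →ₗ[ℝ] E) :=
      (LinearMap.isUnit_iff_isUnit_det _).2 (isUnit_iff_ne_zero.2 hdet)
    exact ((Module.End.isUnit_iff _).1 hu).2
  obtain ⟨v, hv⟩ := hsurj (r x)
  have h := hperp v
  rw [hv, inner_self_eq_zero] at h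
  have := hnorm x
  rw [h, norm_zero] at this
  exact hR.ne this

/-- The Milnor–Rogers argument: the volume of the image of the ball under the linear homotopy from
the identity to a retraction is constant for small times and polynomial in time, hence its value
at time `1`, the integral of the vanishing Jacobian of the retraction, is the volume of the ball. -/
theorem no_contDiff_retraction {R : ℝ} (hR : 0 < R) {r : E → E} (hr : ContDiff ℝ 1 r)
    (hnorm : ∀ x, ‖r x‖ = R) (hfix : ∀ x, ‖x‖ = R → r x = x) : False := by
  let _ : MeasurableSpace E := borel E
  have : BorelSpace E := ⟨rfl⟩
  obtain ⟨ε₁, hε₁, hbij⟩ := homotopy_bijOn_ball hR hr hnorm hfix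
  set A : E → E →L[ℝ] E := fun x => fderiv ℝ (fun x => r x - x) x with hA
  have hg0 : ContDiff ℝ 1 (fun x => r x - x) := hr.sub contDiff_id
  have hgd : ∀ x, HasFDerivAt (fun x => r x - x) (A x) x := fun x =>
    (hg0.differentiable one_ne_zero x).hasFDerivAt
  have hAc : Continuous A := hg0.continuous_fderiv one_ne_zero
  have hAr : ∀ x, 1 + (1 : ℝ) • A x = fderiv ℝ r x := fun x => by
    have h := ((hgd x).add (hasFDerivAt_id x)).fderiv
    have h' : ((fun x => r x - x) + id) = r := by ext; simp
    rw [h'] at h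
    rw [h, one_smul, add_comm]
    rfl
  obtain ⟨C, hC⟩ := (isCompact_closedBall (0 : E) R).exists_bound_of_continuousOn hAc.continuousOn
  have hC0 : 0 ≤ C := (norm_nonneg _).trans (hC 0 (by simpa using hR.le))
  -- the Jacobian is positive, so no absolute value is needed, once the derivative is close to `1`
  obtain ⟨η, hη, hdet⟩ : ∃ η > 0, ∀ M : E →L[ℝ] E, dist M 1 < η → 0 < M.det := by
    have h1 : ∀ᶠ M : E →L[ℝ] E in 𝓝 1, 0 < M.det := by
      refine ContinuousLinearMap.continuous_det.continuousAt.eventually (lt_mem_nhds ?_)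
      simp [ContinuousLinearMap.det, ContinuousLinearMap.one_def]
    exact Metric.eventually_nhds_iff.1 h1
  have hcont : ∀ t : ℝ, Continuous fun x => (1 + t • A x).det := fun t =>
    ContinuousLinearMap.continuous_det.comp (continuous_const.add (hAc.const_smul t))
  have hint : ∀ t : ℝ, IntegrableOn (fun x => (1 + t • A x).det) (ball 0 R) := fun t =>
    ((hcont t).continuousOn.integrableOn_compact (isCompact_closedBall 0 R)).mono_set
      ball_subset_closedBall
  have hsmall : ∀ t ∈ Ioo 0 (min ε₁ (η / (C + 1))),
      ∫ x in ball (0 : E) R, (1 + t • A x).det = volume.real (ball (0 : E) R) := by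
    intro t ht
    have ht0 : 0 < t := ht.1
    have htη : t * C < η := by
      have h := ht.2.trans_le (min_le_right _ _)
      rw [lt_div_iff₀ (by positivity)] at h
      nlinarith
    have hb := hbij t ⟨ht0, ht.2.trans_le (min_le_left _ _)⟩
    have hpos : ∀ x ∈ ball (0 : E) R, 0 < (1 + t • A x).det := fun x hx => by
      apply hdet
      rw [dist_eq_norm, add_sub_cancel_left, norm_smul, Real.norm_of_nonneg ht0.le]
      exact (mul_le_mul_of_nonneg_left (hC x (ball_subset_closedBall hx)) ht0.le).trans_lt htη
    have hv := lintegral_abs_det_fderiv_eq_addHaar_image volume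
      (s := ball (0 : E) R) (f := fun x => x + t • (r x - x)) (f' := fun x => 1 + t • A x)
      measurableSet_ball
      (fun x _ => ((hasFDerivAt_id x).add ((hgd x).const_smul t)).hasFDerivWithinAt) hb.injOn
    rw [hb.image_eq] at hv
    rw [integral_eq_lintegral_of_nonneg_ae
      ((ae_restrict_iff' measurableSet_ball).2 (.of_forall fun x hx => (hpos x hx).le))
      (hcont t).aestronglyMeasurable, Measure.real, ← hv]
    congr 1
    refine setLIntegral_congr_fun measurableSet_ball fun x hx => ?_
    simp only [abs_of_pos (hpos x hx)]
  obtain ⟨w, τ, hτ, hw⟩ := exists_interpolation_nodes (Module.finrank ℝ E)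
    (ε := min ε₁ (η / (C + 1))) (by positivity)
  have hw1 : (1 : ℝ) = ∑ i ∈ Finset.range (Module.finrank ℝ E + 1), w i := by
    simpa using hw 1 (by simp)
  have key : ∫ x in ball (0 : E) R, (1 + (1 : ℝ) • A x).det = volume.real (ball (0 : E) R) := by
    calc ∫ x in ball (0 : E) R, (1 + (1 : ℝ) • A x).det
        = ∫ x in ball (0 : E) R, ∑ i ∈ Finset.range (Module.finrank ℝ E + 1),
            w i * (1 + τ i • A x).det := by
          congr 1
          ext x
          obtain ⟨p, hp, hpe⟩ := exists_polynomial_det_one_add_smul (A x)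
          simp only [← hpe]
          exact hw p hp
      _ = ∑ i ∈ Finset.range (Module.finrank ℝ E + 1), w i * volume.real (ball (0 : E) R) := by
          rw [integral_finsetSum _ fun i _ => (hint (τ i)).const_mul (w i)]
          refine Finset.sum_congr rfl fun i _ => ?_
          rw [integral_const_mul, hsmall _ (hτ i)]
      _ = volume.real (ball (0 : E) R) := by rw [← Finset.sum_mul, ← hw1, one_mul]
  simp only [hAr, det_fderiv_eq_zero_of_norm_const hR hr hnorm, integral_zero] at key
  have : 0 < volume.real (ball (0 : E) R) :=
    ENNReal.toReal_pos (measure_ball_pos _ _ hR).ne' measure_ball_lt_top.ne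
  exact this.ne key

end NoRetraction

/-! ### Brouwer's fixed point theorem and stability of values -/

section Brouwer

variable {E : Type*} [NormedAddCommGroup E] [InnerProductSpace ℝ E] [FiniteDimensional ℝ E]

/-- A nowhere vanishing `C¹` map that is the identity on a sphere normalizes to a retraction of
the ball onto that sphere. -/
lemma exists_zero_of_contDiff {R : ℝ} (hR : 0 < R) {F : E → E} (hF : ContDiff ℝ 1 F)
    (hfix : ∀ x, ‖x‖ = R → F x = x) : ∃ x, F x = 0 := by
  by_contra! h
  refine no_contDiff_retraction hR (r := fun x => (R / ‖F x‖) • F x)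
    ((contDiff_const.div (hF.norm ℝ h) fun x => norm_ne_zero_iff.2 (h x)).smul hF)
    (fun x => ?_) fun x hx => ?_
  · rw [norm_smul, norm_div, norm_norm, Real.norm_of_nonneg hR.le,
      div_mul_cancel₀ _ (norm_ne_zero_iff.2 (h x))]
  · simp only [hfix x hx, hx, div_self hR.ne', one_smul]

/-- Brouwer's fixed point theorem, for a bounded continuous self-map of the whole space. -/
theorem exists_fixedPoint_of_bounded {D : E → E} (hD : Continuous D) {C : ℝ} (hC : 0 < C)
    (hDC : ∀ x, ‖D x‖ ≤ C) : ∃ x, D x = x := by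
  by_contra! hne
  obtain ⟨δ₀, hδ₀, hδ₀D⟩ : ∃ δ > 0, ∀ x ∈ closedBall (0 : E) (2 * C), δ ≤ ‖x - D x‖ :=
    (isCompact_closedBall (0 : E) (2 * C)).exists_forall_le' (a := 0)
      (continuous_id.sub hD).norm.continuousOn
      fun x _ => norm_pos_iff.2 (sub_ne_zero.2 (hne x).symm)
  obtain ⟨A, hA, hAD, -⟩ := hD.exists_contDiff_approx 1 (ε := fun _ => min δ₀ C)
    continuous_const fun _ => lt_min hδ₀ hC
  let χ : ContDiffBump (0 : E) := ⟨2 * C, 3 * C, by linarith, by linarith⟩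
  -- a smooth approximation of `x - D x`, deformed to the identity far away
  obtain ⟨x, hx⟩ := exists_zero_of_contDiff (R := 3 * C) (by linarith)
    (F := fun x => x - χ x • A x) (contDiff_id.sub (χ.contDiff.smul hA)) fun x hx => by
      rw [χ.zero_of_le_dist (by simpa [χ] using hx.ge), zero_smul, sub_zero]
  have hAx := hAD x
  rw [dist_eq_norm] at hAx
  have hx' : x = χ x • A x := sub_eq_zero.1 hx
  by_cases hxC : ‖x‖ ≤ 2 * C
  · have hmem : x ∈ closedBall (0 : E) (2 * C) := by simpa using hxC
    rw [χ.one_of_mem_closedBall hmem, one_smul] at hx'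
    have := hδ₀D x hmem
    nth_rewrite 1 [hx'] at this
    exact absurd (this.trans_lt hAx) (not_lt.2 (min_le_left _ _))
  · have h1 : ‖x‖ ≤ ‖A x‖ := by
      conv_lhs => rw [hx', norm_smul, Real.norm_of_nonneg χ.nonneg]
      exact mul_le_of_le_one_left (norm_nonneg _) χ.le_one
    have h2 : ‖A x‖ ≤ ‖A x - D x‖ + ‖D x‖ := by
      simpa using norm_add_le (A x - D x) (D x)
    have h3 := hAx.trans_le (min_le_right _ _)
    have h4 := hDC x
    linarith

/-- A continuous map on a ball that stays within distance `R` of the identity has a zero. -/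
lemma exists_zero_of_close_id {R : ℝ} (hR : 0 < R) {F : E → E}
    (hF : ContinuousOn F (closedBall 0 R)) (hclose : ∀ x ∈ closedBall 0 R, ‖x - F x‖ ≤ R) :
    ∃ x ∈ closedBall 0 R, F x = 0 := by
  have hmem : ∀ x : E, radialProj R x ∈ closedBall (0 : E) R := fun x => by
    simpa using norm_radialProj_le hR x
  obtain ⟨x, hx⟩ := exists_fixedPoint_of_bounded
    (D := fun x => radialProj R x - F (radialProj R x))
    ((continuous_radialProj hR).sub (hF.comp_continuous (continuous_radialProj hR) hmem)) hR
    (fun x => hclose _ (hmem x))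
  have hxR : ‖x‖ ≤ R := by
    rw [← hx]
    exact hclose _ (hmem x)
  refine ⟨x, by simpa using hxR, ?_⟩
  simpa [radialProj_of_norm_le hR hxR] using hx

/-- The radial push of `E \ {c}` onto the complement of the open `ε`-ball about `c`. -/
noncomputable def pushOut (c : E) (ε : ℝ) (y : E) : E := c + max (ε / ‖y - c‖) 1 • (y - c)

omit [FiniteDimensional ℝ E] in
lemma continuousOn_pushOut (c : E) (ε : ℝ) : ContinuousOn (pushOut c ε) {c}ᶜ := by
  refine continuousOn_const.add (ContinuousOn.smul ?_ (by fun_prop))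
  refine (ContinuousOn.div (by fun_prop) (by fun_prop) fun y hy => ?_).sup continuousOn_const
  exact norm_ne_zero_iff.2 (sub_ne_zero.2 hy)

omit [FiniteDimensional ℝ E] in
lemma pushOut_of_le {c : E} {ε : ℝ} (hε : 0 < ε) {y : E} (hy : ε ≤ ‖y - c‖) :
    pushOut c ε y = y := by
  rw [pushOut, max_eq_right ((div_le_one (hε.trans_le hy)).2 hy), one_smul, add_sub_cancel]

omit [FiniteDimensional ℝ E] in
lemma norm_pushOut_sub {c : E} {ε : ℝ} (hε : 0 < ε) {y : E} (hyc : y ≠ c) (hy : ‖y - c‖ ≤ ε) :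
    ‖pushOut c ε y - c‖ = ε := by
  have h0 : 0 < ‖y - c‖ := norm_pos_iff.2 (sub_ne_zero.2 hyc)
  rw [pushOut, max_eq_left ((one_le_div h0).2 hy), add_sub_cancel_left, norm_smul,
    Real.norm_of_nonneg (by positivity), div_mul_cancel₀ _ h0.ne']

/-- A continuous map into `E` has an arbitrarily close continuous map that does not vanish on a
given sphere: the image of the sphere under a smooth approximation is a null set. -/
lemma exists_approx_ne_zero_on_sphere {G : E → E} (hG : Continuous G) (c : E) {ε : ℝ}
    (hε : 0 < ε) {κ : ℝ} (hκ : 0 < κ) :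
    ∃ P : E → E, Continuous P ∧ (∀ y, ‖P y - G y‖ < κ) ∧ ∀ y ∈ sphere c ε, P y ≠ 0 := by
  let _ : MeasurableSpace E := borel E
  have : BorelSpace E := ⟨rfl⟩
  obtain ⟨Q, hQ, hQG, -⟩ := hG.exists_contDiff_approx 1 (ε := fun _ => κ / 2)
    continuous_const fun _ => half_pos hκ
  have hnull : volume (Q '' sphere c ε) = 0 :=
    addHaar_image_eq_zero_of_differentiableOn_of_addHaar_eq_zero volume
      (hQ.differentiable one_ne_zero).differentiableOn
      (Measure.addHaar_sphere_of_ne_zero volume c hε.ne')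
  obtain ⟨v, hv, hvQ⟩ : ∃ v ∈ ball (0 : E) (κ / 2), v ∉ Q '' sphere c ε := by
    by_contra! h
    exact (measure_ball_pos volume (0 : E) (half_pos hκ)).ne'
      (measure_mono_null (fun v hv => h v hv) hnull)
  refine ⟨fun y => Q y - v, hQ.continuous.sub continuous_const, fun y => ?_, fun y hy h => ?_⟩
  · have h1 := hQG y
    rw [dist_eq_norm] at h1
    rw [mem_ball_zero_iff] at hv
    calc ‖Q y - v - G y‖ = ‖(Q y - G y) - v‖ := by congr 1; abel
      _ ≤ ‖Q y - G y‖ + ‖v‖ := norm_sub_le _ _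
      _ < κ := by linarith
  · exact hvQ ⟨y, hy, sub_eq_zero.1 h⟩

/-- Stable form of invariance of domain: for an injective continuous map `f` on a ball, every map
uniformly close to `f` (injective or not) still covers a fixed ball about the image of the
center.

If `h` omitted a point `c` near `f 0`, a left inverse `G` of `f` could be perturbed, near `c` and
after pushing away from `c`, to a map without zeros on the image of `h`; composing with `h` would
give a map without zeros close to the identity. -/
theorem exists_ball_subset_image_of_close {R : ℝ} (hR : 0 < R) {f : E → E}
    (hf : ContinuousOn f (closedBall 0 R)) (hinj : InjOn f (closedBall 0 R)) :
    ∃ η > 0, ∀ h : E → E, ContinuousOn h (closedBall 0 R) →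
      (∀ x ∈ closedBall 0 R, dist (h x) (f x) < η) → ball (f 0) η ⊆ h '' closedBall 0 R := by
  have h0mem : (0 : E) ∈ closedBall (0 : E) R := by simpa using hR.le
  have hcomp := isCompact_closedBall (0 : E) R
  -- a global continuous left inverse of `f`
  obtain ⟨G, hG⟩ : ∃ G : C(E, E), ∀ x ∈ closedBall 0 R, G (f x) = x := by
    have : CompactSpace (closedBall (0 : E) R) := isCompact_iff_compactSpace.1 hcomp
    have he : IsClosedEmbedding ((closedBall (0 : E) R).domRestrict f) :=
      (continuousOn_iff_continuous_domRestrict.1 hf).isClosedEmbedding hinj.injective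
    obtain ⟨G, hG⟩ := ContinuousMap.exists_extension' he
      (⟨Subtype.val, continuous_subtype_val⟩ : C(closedBall (0 : E) R, E))
    exact ⟨G, fun x hx => congrFun hG ⟨x, hx⟩⟩
  obtain ⟨ε, hε, hGε⟩ : ∃ ε > 0, ∀ y, ‖y - f 0‖ ≤ 2 * ε → ‖G y‖ ≤ R / 8 := by
    obtain ⟨ε, hε, h⟩ := Metric.continuousAt_iff.1 (G.continuous.continuousAt (x := f 0)) (R / 8)
      (by positivity)
    refine ⟨ε / 4, by positivity, fun y hy => ?_⟩
    have := h (x := y) (by rw [dist_eq_norm]; linarith)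
    rw [hG 0 h0mem, dist_zero_right] at this
    exact this.le
  obtain ⟨δ, hδ, hδR, hfδ⟩ : ∃ δ > 0, δ ≤ R ∧
      ∀ x ∈ closedBall 0 R, ε / 2 ≤ ‖f x - f 0‖ → δ ≤ ‖x‖ := by
    obtain ⟨δ, hδ, h⟩ := Metric.continuousWithinAt_iff.1 (hf 0 h0mem) (ε / 2) (by positivity)
    refine ⟨min δ R, lt_min hδ hR, min_le_right _ _, fun x hx hfx => ?_⟩
    by_contra! hlt
    have := h hx (by simpa using hlt.trans_le (min_le_left _ _))
    rw [dist_eq_norm] at this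
    linarith
  obtain ⟨η₁, hη₁, hGη⟩ : ∃ η > 0, ∀ x ∈ closedBall 0 R, ∀ y, dist y (f x) < η →
      ‖G y - x‖ < δ / 8 := by
    have hu := (hcomp.image_of_continuousOn hf).uniformContinuousAt_of_continuousAt G
      (fun _ _ => G.continuous.continuousAt) (dist_mem_uniformity (show 0 < δ / 8 by positivity))
    obtain ⟨η, hη, h⟩ := Metric.mem_uniformity_dist.1 hu
    refine ⟨η, hη, fun x hx y hy => ?_⟩
    have := h (a := f x) (b := y) (by rwa [dist_comm]) (mem_image_of_mem f hx)
    simp only [mem_ofPred_eq] at this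
    rwa [hG x hx, dist_comm, dist_eq_norm] at this
  refine ⟨min η₁ (ε / 4), by positivity, fun h hh hhf c hc => ?_⟩
  by_contra hcim
  have hne : ∀ x ∈ closedBall 0 R, h x ≠ c := fun x hx hxc => hcim ⟨x, hx, hxc⟩
  have hc' : ‖c - f 0‖ < ε / 4 := by
    rw [← dist_eq_norm]
    exact (mem_ball.1 hc).trans_le (min_le_right _ _)
  obtain ⟨P, hP, hPG, hPne⟩ := exists_approx_ne_zero_on_sphere G.continuous c hε
    (show 0 < δ / 4 by positivity)
  obtain ⟨x, hx, hx0⟩ := exists_zero_of_close_id hR (F := fun x => P (pushOut c ε (h x)))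
    (hP.comp_continuousOn ((continuousOn_pushOut c ε).comp hh hne)) fun x hx => by
      have h1 := hGη x hx (h x) ((hhf x hx).trans_le (min_le_left _ _))
      have h2 := hPG (pushOut c ε (h x))
      have h3 : ‖G (pushOut c ε (h x)) - G (h x)‖ ≤ R / 4 := by
        by_cases hle : ε ≤ ‖h x - c‖
        · rw [pushOut_of_le hε hle, sub_self, norm_zero]
          positivity
        · push Not at hle
          have h4 := norm_pushOut_sub hε (hne x hx) hle.le
          have h5 := hGε (pushOut c ε (h x)) (by
            have := norm_sub_le_norm_sub_add_norm_sub (pushOut c ε (h x)) c (f 0)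
            linarith)
          have h6 := hGε (h x) (by
            have := norm_sub_le_norm_sub_add_norm_sub (h x) c (f 0)
            linarith)
          have := norm_sub_le (G (pushOut c ε (h x))) (G (h x))
          linarith
      have h7 := norm_sub_le_norm_sub_add_norm_sub (P (pushOut c ε (h x)))
        (G (pushOut c ε (h x))) x
      have h8 := norm_sub_le_norm_sub_add_norm_sub (G (pushOut c ε (h x))) (G (h x)) x
      rw [norm_sub_rev]
      linarith
  by_cases hle : ε ≤ ‖h x - c‖
  · -- away from `c` nothing is pushed, and `P` is close to `x`, which is far from `0`
    rw [pushOut_of_le hε hle] at hx0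
    have h1 := hGη x hx (h x) ((hhf x hx).trans_le (min_le_left _ _))
    have h2 := hPG (h x)
    rw [hx0, zero_sub, norm_neg] at h2
    have h3 : ‖h x - f x‖ < ε / 4 := by
      rw [← dist_eq_norm]
      exact (hhf x hx).trans_le (min_le_right _ _)
    have h4 := hfδ x hx (by
      have h5 := norm_sub_le_norm_sub_add_norm_sub (h x) (f x) c
      have h6 := norm_sub_le_norm_sub_add_norm_sub (f x) (f 0) c
      rw [norm_sub_rev (f 0) c] at h6
      linarith)
    have h7 := norm_sub_norm_le x (G (h x))
    rw [norm_sub_rev] at h7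
    linarith
  · push Not at hle
    exact hPne _ (by simpa [dist_eq_norm] using norm_pushOut_sub hε (hne x hx) hle.le) hx0

end Brouwer

/-! ### Manifolds with left-injective operations -/

/-- Around each point of a topological manifold there is a chart, in the form of an
`OpenPartialHomeomorph`. -/
lemma IsTopManifold.exists_chart {n : ℕ} {M : Type*} [TopologicalSpace M]
    (hM : IsTopManifold n M) (x : M) :
    ∃ φ : OpenPartialHomeomorph M (EuclideanSpace ℝ (Fin n)), x ∈ φ.source := by
  obtain ⟨U, V, hU, hx, hV, ⟨e⟩⟩ := hM x
  let U' : TopologicalSpace.Opens M := ⟨U, hU⟩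
  let V' : TopologicalSpace.Opens (EuclideanSpace ℝ (Fin n)) := ⟨V, hV⟩
  have hU' : Nonempty U' := ⟨⟨x, hx⟩⟩
  have hV' : Nonempty V' := ⟨e ⟨x, hx⟩⟩
  let e' : U' ≃ₜ V' := e
  refine ⟨(U'.openPartialHomeomorphSubtypeCoe hU').symm.trans
    (e'.toOpenPartialHomeomorph.trans (V'.openPartialHomeomorphSubtypeCoe hV')), ?_⟩
  have hx_mem : x ∈ U' := hx
  simpa using hx_mem

/-- On a topological `n`-manifold without boundary with a continuous binary operation
whose left shifts are injective: for all points `e, x` and every neighborhood `O` of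
`e` there is a neighborhood `U` of `x` such that `⋂_{u ∈ U} u·O` is a neighborhood
of `x·e`. -/
theorem exists_nhds_iInter_smul_mem_nhds
    {n : ℕ} {N : Type*} [TopologicalSpace N] [T2Space N] [ParacompactSpace N]
    (hN : IsTopManifold n N)
    (mul : N → N → N) (hcont : Continuous fun p : N × N => mul p.1 p.2)
    (hleft : ∀ x : N, Function.Injective (mul x)) :
    ∀ e x : N, ∀ O ∈ nhds e, ∃ U ∈ nhds x, (⋂ u ∈ U, mul u '' O) ∈ nhds (mul x e) := by
  intro e x O hO
  obtain ⟨φ, hφ⟩ := hN.exists_chart e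
  obtain ⟨ψ, hψ⟩ := hN.exists_chart (mul x e)
  -- the inverse chart at `e`, recentered at `0`
  set α : EuclideanSpace ℝ (Fin n) → N := fun z => φ.symm (φ e + z) with hα
  have hα0 : α 0 = e := by simp [hα, φ.left_inv hφ]
  obtain ⟨R, hR, hball⟩ : ∃ R > 0, ∀ z ∈ closedBall (0 : EuclideanSpace ℝ (Fin n)) R,
      φ e + z ∈ φ.target ∧ α z ∈ O ∧ mul x (α z) ∈ ψ.source := by
    have hshift : ContinuousAt (fun z : EuclideanSpace ℝ (Fin n) => φ e + z) 0 :=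
      (continuous_const_add _).continuousAt
    have hαc : ContinuousAt α 0 := by
      refine ContinuousAt.comp (g := φ.symm) ?_ hshift
      simpa using φ.continuousAt_symm (φ.map_source hφ)
    have h1 : ∀ᶠ z in 𝓝 (0 : EuclideanSpace ℝ (Fin n)), φ e + z ∈ φ.target :=
      hshift.eventually (φ.open_target.mem_nhds (by simpa using φ.map_source hφ))
    have h2 : ∀ᶠ z in 𝓝 (0 : EuclideanSpace ℝ (Fin n)), α z ∈ O :=
      hαc.eventually (by rw [hα0]; exact hO)
    have h3 : ∀ᶠ z in 𝓝 (0 : EuclideanSpace ℝ (Fin n)), mul x (α z) ∈ ψ.source := by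
      have hm : ContinuousAt (mul x) (α 0) :=
        (hcont.comp (Continuous.prodMk_right x)).continuousAt
      refine (hm.comp hαc).eventually (ψ.open_source.mem_nhds ?_)
      simpa [hα0] using hψ
    obtain ⟨R, hR, h⟩ := Metric.nhds_basis_closedBall.mem_iff.1 (h1.and (h2.and h3))
    exact ⟨R, hR, fun z hz => h hz⟩
  have hαc : ∀ z ∈ closedBall (0 : EuclideanSpace ℝ (Fin n)) R, ContinuousAt α z := fun z hz =>
    ContinuousAt.comp (g := φ.symm) (φ.continuousAt_symm (hball z hz).1)
      (continuous_const_add _).continuousAt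
  have hαinj : InjOn α (closedBall 0 R) := fun z hz w hw h =>
    add_left_cancel (φ.symm.injOn (hball z hz).1 (hball w hw).1 h)
  -- joint continuity, in charts, of the operation
  have hH : ∀ u, ∀ z ∈ closedBall (0 : EuclideanSpace ℝ (Fin n)) R, mul u (α z) ∈ ψ.source →
      ContinuousAt (fun p : N × EuclideanSpace ℝ (Fin n) => ψ (mul p.1 (α p.2))) (u, z) := by
    intro u z hz hs
    have hin : ContinuousAt (fun p : N × EuclideanSpace ℝ (Fin n) => (p.1, α p.2)) (u, z) :=
      continuousAt_fst.prodMk (ContinuousAt.comp (g := α) (hαc z hz) continuousAt_snd)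
    exact ContinuousAt.comp (g := ψ) (ψ.continuousAt hs)
      (ContinuousAt.comp (g := fun p : N × N => mul p.1 p.2) hcont.continuousAt hin)
  have hslice : ∀ u, (∀ z ∈ closedBall (0 : EuclideanSpace ℝ (Fin n)) R,
      mul u (α z) ∈ ψ.source) → ContinuousOn (fun z => ψ (mul u (α z))) (closedBall 0 R) :=
    fun u hu z hz => (ContinuousAt.comp (f := fun z => (u, z)) (hH u z hz (hu z hz))
      (Continuous.prodMk_right u).continuousAt).continuousWithinAt
  obtain ⟨η, hη, hcover⟩ := exists_ball_subset_image_of_close hR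
    (f := fun z => ψ (mul x (α z))) (hslice x fun z hz => (hball z hz).2.2)
    (fun z hz w hw h => hαinj hz hw
      (hleft x (ψ.injOn (hball z hz).2.2 (hball w hw).2.2 h)))
  have hU : ∀ᶠ u in 𝓝 x, ∀ z ∈ closedBall (0 : EuclideanSpace ℝ (Fin n)) R,
      mul u (α z) ∈ ψ.source ∧ dist (ψ (mul u (α z))) (ψ (mul x (α z))) < η := by
    refine (isCompact_closedBall _ _).eventually_forall_of_forall_eventually fun z hz => ?_
    have hs := (hball z hz).2.2
    have hm : ContinuousAt (fun p : N × EuclideanSpace ℝ (Fin n) => mul p.1 (α p.2)) (x, z) :=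
      ContinuousAt.comp (g := fun p : N × N => mul p.1 p.2) hcont.continuousAt
        (continuousAt_fst.prodMk (ContinuousAt.comp (g := α) (hαc z hz) continuousAt_snd))
    have hx' : ContinuousAt (fun p : N × EuclideanSpace ℝ (Fin n) => ψ (mul x (α p.2))) (x, z) :=
      ContinuousAt.comp (g := fun p : N × EuclideanSpace ℝ (Fin n) => ψ (mul p.1 (α p.2)))
        (f := fun p : N × EuclideanSpace ℝ (Fin n) => (x, p.2)) (x := (x, z)) (hH x z hz hs)
        (by fun_prop)
    refine (hm.eventually (ψ.open_source.mem_nhds hs)).and ?_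
    exact ((hH x z hz hs).dist hx').eventually (gt_mem_nhds (by simpa using hη))
  refine ⟨_, hU, ?_⟩
  have hmem : ψ.source ∩ ψ ⁻¹' ball (ψ (mul x e)) η ∈ 𝓝 (mul x e) :=
    Filter.inter_mem (ψ.open_source.mem_nhds hψ)
      ((ψ.continuousAt hψ).preimage_mem_nhds (ball_mem_nhds _ hη))
  refine Filter.mem_of_superset hmem fun y hy => mem_iInter₂.2 fun u hu => ?_
  have hu' : ∀ z ∈ closedBall (0 : EuclideanSpace ℝ (Fin n)) R,
      mul u (α z) ∈ ψ.source ∧ dist (ψ (mul u (α z))) (ψ (mul x (α z))) < η := hu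
  obtain ⟨z, hz, hzy⟩ := hcover (fun z => ψ (mul u (α z))) (hslice u fun z hz => (hu' z hz).1)
    (fun z hz => (hu' z hz).2) (by rw [hα0]; exact hy.2)
  exact ⟨α z, (hball z hz).2.1, ψ.injOn (hu' z hz).1 hy.1 hzy⟩
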